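/- There do not exist DSOS polynomials σ0, σ1 in two real variables such that the polynomial identity (-2 + x1 + x2)^2 = σ0(x1,x2) + σ1(x1,x2)*(1 - x1^2 - x2^2) holds. -/

import Mathlib

/-!
With `s = √2 / 2`, the four points `(±s, ±s)` lie on the unit circle, so evaluation there kills
every multiple of `1 - x₁² - x₂²`. Consider the linear functional
`L p = p(s, s) + p(s, -s) + p(-s, s) - p(-s, -s)`.
It is nonnegative on squares of monomials and of `m ± m'`: at the four points a monomial takes a
fixed absolute value, with signs given by a character of `{±1}²`, and
`|χ(1,1) + χ(1,-1) + χ(-1,1) - χ(-1,-1)| = 2` for each character `χ`. Hence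
`L ((m ± m')²)` is `2 (M² + M'² ± 2 M M')` for some choice of sign, where `M`, `M'` are the
absolute values. So `L` is nonnegative on DSOS polynomials, whereas
`L ((-2 + x₁ + x₂)²) = 8 - 16 s < 0`.
-/


/-- A polynomial is DSOS if it is a finite nonnegative linear combination of
polynomials of the form `m^2`, `(m + m')^2` and `(m - m')^2` where `m`, `m'`
are monomials.  The sign `e k ∈ {0, 1, -1}` selects which of the three forms
the `k`-th term takes. -/
def IsDSOS (σ : MvPolynomial (Fin 2) ℝ) : Prop :=
  ∃ (n : ℕ) (c : Fin n → ℝ) (e : Fin n → ℝ) (a b : Fin n → (Fin 2 →₀ ℕ)),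
    (∀ k, 0 ≤ c k) ∧ (∀ k, e k = 0 ∨ e k = 1 ∨ e k = -1) ∧
    σ = ∑ k, MvPolynomial.C (c k) *
      (MvPolynomial.monomial (a k) (1 : ℝ) + MvPolynomial.monomial (b k) (e k))^2


open MvPolynomial in
/-- The signed sum of evaluations at `(±s, ±s)` is nonnegative on DSOS polynomials. -/
lemma IsDSOS.signed_eval_nonneg {σ : MvPolynomial (Fin 2) ℝ} (h : IsDSOS σ) (s : ℝ) :
    0 ≤ eval ![s, s] σ + eval ![s, -s] σ + eval ![-s, s] σ - eval ![-s, -s] σ := by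
  obtain ⟨n, c, e, a, b, hc, he, rfl⟩ := h
  simp only [map_sum, ← Finset.sum_add_distrib, ← Finset.sum_sub_distrib]
  refine Finset.sum_nonneg fun k _ => ?_
  have hm : ∀ (v : Fin 2 → ℝ) (d : Fin 2 →₀ ℕ) (r : ℝ),
      eval v (monomial d r) = r * (v 0 ^ d 0 * v 1 ^ d 1) := by
    intro v d r
    rw [eval_monomial, Finsupp.prod_fintype _ _ (by simp), Fin.prod_univ_two]
  simp only [map_mul, map_pow, map_add, eval_C, hm, ← mul_add, ← mul_sub]
  refine mul_nonneg (hc k) ?_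
  simp only [Matrix.cons_val_zero, Matrix.cons_val_one]
  generalize e k = t
  rcases Nat.even_or_odd (a k 0) with h1 | h1 <;>
  rcases Nat.even_or_odd (a k 1) with h2 | h2 <;>
  rcases Nat.even_or_odd (b k 0) with h3 | h3 <;>
  rcases Nat.even_or_odd (b k 1) with h4 | h4 <;>
  simp only [h1.neg_pow, h2.neg_pow, h3.neg_pow, h4.neg_pow] <;>
  generalize s ^ (a k 0) = A <;> generalize s ^ (a k 1) = A' <;>
  generalize s ^ (b k 0) = B <;> generalize s ^ (b k 1) = B' <;>
  nlinarith [sq_nonneg (A * A' + t * (B * B')), sq_nonneg (A * A' - t * (B * B'))]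

theorem stmt_14 :
    ¬ ∃ σ0 σ1 : MvPolynomial (Fin 2) ℝ, IsDSOS σ0 ∧ IsDSOS σ1 ∧
      (MvPolynomial.C (-2) + MvPolynomial.X 0 + MvPolynomial.X 1)^2 =
        σ0 + σ1 * (1 - (MvPolynomial.X 0)^2 - (MvPolynomial.X 1)^2) := by
  rintro ⟨σ0, σ1, h0, -, h⟩
  obtain ⟨s, hs, hs2⟩ : ∃ s : ℝ, 1 / 2 < s ∧ s ^ 2 = 1 / 2 :=
    ⟨√(1 / 2), Real.lt_sqrt_of_sq_lt (by norm_num), Real.sq_sqrt (by norm_num)⟩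
  have hL := h0.signed_eval_nonneg s
  have key : ∀ x y : ℝ, x ^ 2 = 1 / 2 → y ^ 2 = 1 / 2 →
      MvPolynomial.eval ![x, y] σ0 = (-2 + x + y) ^ 2 := by
    intro x y hx hy
    have hxy := congrArg (MvPolynomial.eval ![x, y]) h
    simp only [map_mul, map_pow, map_add, map_sub, map_one, MvPolynomial.eval_C,
      MvPolynomial.eval_X, Matrix.cons_val_zero, Matrix.cons_val_one, hx, hy] at hxy
    linarith
  have hs2' : (-s) ^ 2 = 1 / 2 := by rw [neg_sq, hs2]
  rw [key s s hs2 hs2, key s (-s) hs2 hs2', key (-s) s hs2' hs2, key (-s) (-s) hs2' hs2'] at hL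
  nlinarith
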